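/- Fix an integer j ≥ 0 and for each integer k > j set θ_{j,k} = (2j+1)π/(2(2k+1)) and C_{j,k} = Σ_{i=0}^{k−1} 4(k−i)·cos((2i+1)θ_{j,k}). Then the sequence k ↦ C_{j,k} is strictly increasing on k > j: for all integers j < k < k', C_{j,k} < C_{j,k'}. -/

import Mathlib

/-!
The sum is a Fejér-type kernel: multiplying twice by `2 sin t` telescopes it to
`sin² t · Σ_{i<k} 4(k-i)cos((2i+1)t) = cos t - cos((2k+1)t)`. At `t = θ_{j,k}` the last cosine is
taken at an odd multiple of `π/2` and vanishes, so `C_{j,k} = cos θ / (1 - cos² θ)`. As `k` grows,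
`θ` decreases within `(0, π)`, so `cos θ` increases, and `x ↦ x / (1 - x²)` is increasing on
`(-1, 1)`.
-/

open Finset Real

/-- The sum `Σ_{i<k} 4(k-i)cos((2i+1)t)`, which at `t = θ_{j,k}` is `C_{j,k}`. The angle is left
free so that the kernel can be evaluated in closed form. -/
noncomputable def subRosaSum (k : ℕ) (t : ℝ) : ℝ :=
  ∑ i ∈ range k, 4 * ((k : ℝ) - (i : ℝ)) * cos ((2 * (i : ℝ) + 1) * t)

/-- The angle `θ_{j,k}`, an odd multiple of `π / (2(2k+1))`, at which `subRosaSum k` is the modulus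
of the `j`-th eigenvalue. For `k ≤ j` it is still defined, but leaves `(0, π / 2)`. -/
noncomputable def subRosaAngle (j k : ℕ) : ℝ :=
  (2 * (j : ℝ) + 1) * π / (2 * (2 * (k : ℝ) + 1))

theorem two_mul_sin_mul_sum_cos_odd_mul (t : ℝ) (k : ℕ) :
    2 * sin t * ∑ i ∈ range k, cos ((2 * (i : ℝ) + 1) * t) = sin (2 * (k : ℝ) * t) := by
  have sum_eq : sin t * ∑ i ∈ range k, cos ((2 * (i : ℝ) + 1) * t)
      = sin ((k : ℝ) * t) * cos ((k : ℝ) * t) := by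
    convert sin_mul_sum_cos k (2 * t) t using 4 <;> ring
  rw [mul_assoc 2 (sin t), sum_eq, mul_assoc 2 (k : ℝ), sin_two_mul, mul_assoc]

theorem subRosaSum_succ (k : ℕ) (t : ℝ) :
    subRosaSum (k + 1) t
      = subRosaSum k t + 4 * ∑ i ∈ range (k + 1), cos ((2 * (i : ℝ) + 1) * t) := by
  have extend_range : subRosaSum k t
      = ∑ i ∈ range (k + 1), 4 * ((k : ℝ) - (i : ℝ)) * cos ((2 * (i : ℝ) + 1) * t) := by
    simp [subRosaSum, sum_range_succ]
  rw [extend_range, subRosaSum, mul_sum, ← sum_add_distrib]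
  refine sum_congr rfl fun i _ ↦ ?_
  push_cast
  ring

theorem sin_sq_mul_subRosaSum (k : ℕ) (t : ℝ) :
    sin t ^ 2 * subRosaSum k t = cos t - cos ((2 * (k : ℝ) + 1) * t) := by
  induction k with
  | zero => simp [subRosaSum]
  | succ k ih =>
    have two_mul_sin_mul_sin_eq :
        2 * sin t * sin (2 * ((k + 1 : ℕ) : ℝ) * t)
          = cos ((2 * (k : ℝ) + 1) * t) - cos ((2 * ((k + 1 : ℕ) : ℝ) + 1) * t) := by
      rw [two_mul_sin_mul_sin, ← cos_neg]
      push_cast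
      ring_nf
    calc sin t ^ 2 * subRosaSum (k + 1) t
        = sin t ^ 2 * subRosaSum k t
            + 2 * sin t * (2 * sin t * ∑ i ∈ range (k + 1), cos ((2 * (i : ℝ) + 1) * t)) := by
          rw [subRosaSum_succ]
          ring
      _ = cos t - cos ((2 * ((k + 1 : ℕ) : ℝ) + 1) * t) := by
          rw [ih, two_mul_sin_mul_sum_cos_odd_mul, two_mul_sin_mul_sin_eq, sub_add_sub_cancel]

theorem subRosaAngle_strictAnti (j : ℕ) : StrictAnti (subRosaAngle j) := by
  intro k k' hk
  unfold subRosaAngle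
  gcongr

theorem subRosaAngle_mem_Ioo {j k : ℕ} (hjk : j ≤ 2 * k) : subRosaAngle j k ∈ Set.Ioo 0 π := by
  have hjk' : (j : ℝ) ≤ 2 * k := mod_cast hjk
  refine ⟨by unfold subRosaAngle; positivity, ?_⟩
  rw [subRosaAngle, div_lt_iff₀ (by positivity), mul_comm]
  gcongr
  linarith

theorem cos_odd_mul_subRosaAngle (j k : ℕ) : cos ((2 * (k : ℝ) + 1) * subRosaAngle j k) = 0 := by
  refine cos_eq_zero_iff.mpr ⟨j, ?_⟩
  unfold subRosaAngle
  push_cast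
  field_simp

theorem subRosaSum_subRosaAngle {j k : ℕ} (hjk : j ≤ 2 * k) :
    subRosaSum k (subRosaAngle j k)
      = cos (subRosaAngle j k) / (1 - cos (subRosaAngle j k) ^ 2) := by
  have sin_pos : 0 < sin (subRosaAngle j k) := sin_pos_of_mem_Ioo (subRosaAngle_mem_Ioo hjk)
  rw [← sin_sq, eq_div_iff (by positivity), mul_comm, sin_sq_mul_subRosaSum,
    cos_odd_mul_subRosaAngle, sub_zero]

theorem strictMonoOn_div_one_sub_sq {K : Type*} [Field K] [LinearOrder K] [IsStrictOrderedRing K] :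
    StrictMonoOn (fun x : K ↦ x / (1 - x ^ 2)) (Set.Ioo (-1) 1) := by
  rintro x ⟨neg_one_lt_x, x_lt_one⟩ y ⟨neg_one_lt_y, y_lt_one⟩ hxy
  have hx : 0 < 1 - x ^ 2 := by nlinarith
  have hy : 0 < 1 - y ^ 2 := by nlinarith
  have one_add_mul_pos : 0 < 1 + x * y := by nlinarith
  rw [div_lt_div_iff₀ hx hy, ← sub_pos]
  calc 0 < (y - x) * (1 + x * y) := mul_pos (sub_pos.mpr hxy) one_add_mul_pos
    _ = y * (1 - x ^ 2) - x * (1 - y ^ 2) := by ring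

theorem C_strict_increasing_general (j : ℕ) :
    StrictMonoOn (fun k : ℕ ↦ subRosaSum k (subRosaAngle j k)) {k | j ≤ 2 * k} := by
  intro k hk k' hk' hkk'
  have angle_mem := subRosaAngle_mem_Ioo hk
  have angle_mem' := subRosaAngle_mem_Ioo hk'
  have cos_lt : cos (subRosaAngle j k) < cos (subRosaAngle j k') :=
    strictAntiOn_cos (Set.Ioo_subset_Icc_self angle_mem') (Set.Ioo_subset_Icc_self angle_mem)
      (subRosaAngle_strictAnti j hkk')
  simpa only [subRosaSum_subRosaAngle hk, subRosaSum_subRosaAngle hk'] using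
    strictMonoOn_div_one_sub_sq (mapsTo_cos_Ioo angle_mem) (mapsTo_cos_Ioo angle_mem') cos_lt

/-- for fixed `j`, the quantity
`C_{j,k} = Σ_{i=0}^{k−1} 4(k−i)cos((2i+1)θ_{j,k})`, with
`θ_{j,k} = (2j+1)π/(2(2k+1))`, is strictly increasing in `k` on `k > j`. -/
theorem C_strict_increasing (j : ℕ) :
    ∀ k k' : ℕ, j < k → k < k' →
      (∑ i ∈ Finset.range k, 4 * ((k : ℝ) - (i : ℝ)) *
          Real.cos ((2 * (i : ℝ) + 1) * ((2 * (j : ℝ) + 1) * Real.pi / (2 * (2 * (k : ℝ) + 1))))) <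
      (∑ i ∈ Finset.range k', 4 * ((k' : ℝ) - (i : ℝ)) *
          Real.cos ((2 * (i : ℝ) + 1) * ((2 * (j : ℝ) + 1) * Real.pi / (2 * (2 * (k' : ℝ) + 1))))) := by
  intro k k' hjk hkk'
  exact C_strict_increasing_general j (show j ≤ 2 * k by lia) (show j ≤ 2 * k' by lia) hkk'
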